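/- arXiv:1402.6769 — 2 statements merged into one kernel-verified Lean document; each statement's English description precedes it below -/
import Mathlib

section
/- Let Y be a nonnegative random variable with finite nonzero mean μ = E[Y], and suppose there exists a random variable Y^s defined on the same probability space having the Y-size bias distribution and satisfying Y^s ≤ Y + c almost surely for some constant c > 0. Then max{ sup_{t ≥ 0} P(Y − μ ≥ t), sup_{−μ ≤ t ≤ 0} P(Y − μ ≤ t) } ≤ (μ/(μ+t))^{(t+μ)/c} · e^{t/c}, i.e. for every t ≥ 0, P(Y − μ ≥ t) ≤ (μ/(μ+t))^{(t+μ)/c} e^{t/c}, and for every t with −μ ≤ t ≤ 0, P(Y − μ ≤ t) ≤ (μ/(μ+t))^{(t+μ)/c} e^{t/c}. -/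
open MeasureTheory

/-- `Ys` has the `Y`-size bias distribution (with respect to the probability measure `P`):
`E[Y f(Y)] = E[Y] ⬝ E[f(Ys)]` for all bounded measurable `f`. -/
def HasSizeBiasedDistribution {Ω : Type*} [MeasurableSpace Ω] (P : Measure Ω)
    (Y Ys : Ω → ℝ) : Prop :=
  ∀ f : ℝ → ℝ, Measurable f → (∃ C : ℝ, ∀ x, |f x| ≤ C) →
    ∫ ω, Y ω * f (Y ω) ∂P = (∫ ω, Y ω ∂P) * ∫ ω, f (Ys ω) ∂P

/-! Chernoff's method. Let `μ` be the mean of `Y`. The size bias identity turns the derivative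
`E[Y exp (θ Y)]` of the moment generating function `m` into `μ E[exp (θ Ys)]`, and `Ys ≤ Y + c`
then gives `m' θ ≤ μ exp (θ c) m θ` for `θ ≥ 0` and the reverse inequality for `θ ≤ 0`. In both
cases integrating away from `0` bounds `m` by the moment generating function of `c` times a Poisson
variable of mean `μ / c`, and the claimed tails are the optimised Chernoff bounds of that variable.
Since `exp (θ Y)` is not known in advance to be integrable for `θ > 0`, the upper tail is proved for
the truncation `min Y M`.
-/

open Real Set Filter Topology ProbabilityTheory

lemma antitoneOn_mul_exp_neg_of_deriv_le_mul {D : Set ℝ} (hD : Convex ℝ D) {f f' A a : ℝ → ℝ}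
    (hf : ContinuousOn f D) (hA : ContinuousOn A D)
    (hf' : ∀ x ∈ interior D, HasDerivAt f (f' x) x)
    (hA' : ∀ x ∈ interior D, HasDerivAt A (a x) x)
    (hle : ∀ x ∈ interior D, f' x ≤ a x * f x) :
    AntitoneOn (fun x ↦ f x * exp (-A x)) D := by
  refine antitoneOn_of_hasDerivWithinAt_nonpos hD (hf.mul hA.neg.rexp)
    (fun x hx ↦ ((hf' x hx).mul (hA' x hx).neg.exp).hasDerivWithinAt) fun x hx ↦ ?_
  calc f' x * exp (-A x) + f x * (exp (-A x) * -a x)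
      = (f' x - a x * f x) * exp (-A x) := by ring
    _ ≤ 0 := mul_nonpos_of_nonpos_of_nonneg (sub_nonpos.2 (hle x hx)) (exp_pos _).le

section Mgf

variable {Ω : Type*} [MeasurableSpace Ω] {P : Measure Ω} {X : Ω → ℝ} {b : ℝ}

lemma Ici_zero_subset_integrableExpSet_of_le [IsFiniteMeasure P] (hX : AEMeasurable X P)
    (hb : ∀ᵐ ω ∂P, X ω ≤ b) : Ici 0 ⊆ integrableExpSet X P :=
  fun θ hθ ↦ integrable_exp_mul_of_le θ b hθ hX hb

lemma continuousOn_mgf_Ici_of_le [IsFiniteMeasure P] (hX : AEMeasurable X P)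
    (hb : ∀ᵐ ω ∂P, X ω ≤ b) : ContinuousOn (mgf X P) (Ici 0) := by
  intro θ _
  refine continuousWithinAt_of_dominated (bound := fun _ ↦ exp ((θ + 1) * |b|))
    (.of_forall fun x ↦ (hX.const_mul x).exp.aestronglyMeasurable) ?_ (integrable_const _)
    (.of_forall fun ω ↦ by fun_prop)
  filter_upwards [self_mem_nhdsWithin, mem_nhdsWithin_of_mem_nhds (Iio_mem_nhds (lt_add_one θ))]
    with x (hx₀ : 0 ≤ x) (hx : x < θ + 1)
  filter_upwards [hb] with ω hω
  rw [norm_of_nonneg (exp_pos _).le, exp_le_exp]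
  calc x * X ω ≤ x * |b| := by gcongr; exact hω.trans (le_abs_self b)
    _ ≤ (θ + 1) * |b| := by gcongr

lemma mgf_le_exp_of_integral_mul_exp_le [IsProbabilityMeasure P] (hX : AEMeasurable X P)
    (hb : ∀ᵐ ω ∂P, X ω ≤ b) {A a : ℝ → ℝ} (hA : ∀ θ, HasDerivAt A (a θ) θ) (hA₀ : A 0 = 0)
    (hle : ∀ θ, 0 ≤ θ → ∫ ω, X ω * exp (θ * X ω) ∂P ≤ a θ * mgf X P θ) {θ : ℝ} (hθ : 0 ≤ θ) :
    mgf X P θ ≤ exp (A θ) := by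
  have hanti : AntitoneOn (fun x ↦ mgf X P x * exp (-A x)) (Ici 0) :=
    antitoneOn_mul_exp_neg_of_deriv_le_mul (convex_Ici 0) (continuousOn_mgf_Ici_of_le hX hb)
      (HasDerivAt.continuousOn fun x _ ↦ hA x)
      (fun x hx ↦ hasDerivAt_mgf
        (interior_mono (Ici_zero_subset_integrableExpSet_of_le hX hb) hx))
      (fun x _ ↦ hA x) (fun x hx ↦ hle x (interior_subset hx))
  have hle_one : mgf X P θ * exp (-A θ) ≤ 1 := by
    simpa [hA₀] using hanti self_mem_Ici hθ hθ
  rwa [exp_neg, ← div_eq_mul_inv, div_le_one (exp_pos _)] at hle_one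

end Mgf

/-- The cumulant generating function of `c * N` at `θ`, for `N` Poisson distributed with mean
`μ / c`. Its exponential is the bound on the moment generating function of `Y`. -/
noncomputable def scaledPoissonCgf (μ c θ : ℝ) : ℝ := μ * (exp (θ * c) - 1) / c

section ScaledPoissonCgf

variable {μ c : ℝ}

lemma scaledPoissonCgf_zero : scaledPoissonCgf μ c 0 = 0 := by simp [scaledPoissonCgf]

lemma hasDerivAt_scaledPoissonCgf (hc : c ≠ 0) (θ : ℝ) :
    HasDerivAt (scaledPoissonCgf μ c) (μ * exp (θ * c)) θ := by
  refine (((((hasDerivAt_mul_const c).exp).sub_const 1).const_mul μ).div_const c).congr_deriv ?_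
  field_simp

lemma scaledPoissonCgf_neg_neg (θ : ℝ) :
    scaledPoissonCgf (-μ) (-c) θ = scaledPoissonCgf μ c (-θ) := by
  simp only [scaledPoissonCgf, neg_mul, mul_neg, neg_div_neg_eq]

lemma tendsto_scaledPoissonCgf_atBot (hc : 0 < c) :
    Tendsto (scaledPoissonCgf μ c) atBot (𝓝 (-μ / c)) := by
  have hexp : Tendsto (fun θ ↦ exp (θ * c)) atBot (𝓝 0) :=
    tendsto_exp_atBot.comp (tendsto_id.atBot_mul_const hc)
  unfold scaledPoissonCgf
  simpa only [zero_sub, mul_neg_one] using ((hexp.sub_const 1).const_mul μ).div_const c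

/- The exponent `-θ * y + scaledPoissonCgf μ c θ` is minimal at `θ = log (y / μ) / c`. -/
lemma exp_neg_mul_add_scaledPoissonCgf_log_div (hμ : 0 < μ) (hc : c ≠ 0) {y : ℝ} (hy : 0 < y) :
    exp (-(log (y / μ) / c) * y + scaledPoissonCgf μ c (log (y / μ) / c)) =
      (μ / y) ^ (y / c) * exp ((y - μ) / c) := by
  rw [exp_add, scaledPoissonCgf, div_mul_cancel₀ _ hc, exp_log (by positivity),
    rpow_def_of_pos (by positivity), ← inv_div y μ, log_inv]
  congr 2
  · ring
  · field_simp

end ScaledPoissonCgf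

namespace HasSizeBiasedDistribution

variable {Ω : Type*} [MeasurableSpace Ω] {P : Measure Ω} {Y Ys : Ω → ℝ} {c θ : ℝ}

/- `Ys` is not assumed measurable. Were `f ∘ Ys` not integrable, neither would `f ∘ Ys + 1` be; with
both integrals equal to the junk value `0`, subtracting the two size bias identities would give
`E[Y] = 0`. -/
lemma integrable_comp [IsFiniteMeasure P] (h : HasSizeBiasedDistribution P Y Ys)
    (hY : Integrable Y P) (hY₀ : P[Y] ≠ 0) {f : ℝ → ℝ} (hf : Measurable f)
    (hfb : ∃ C, ∀ x, |f x| ≤ C) : Integrable (fun ω ↦ f (Ys ω)) P := by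
  by_contra hnot
  have hnot' : ¬Integrable (fun ω ↦ f (Ys ω) + 1) P := by rwa [integrable_add_const_iff]
  obtain ⟨C, hC⟩ := hfb
  have hf₀ : ∫ ω, Y ω * f (Y ω) ∂P = 0 := by
    rw [h f hf ⟨C, hC⟩, integral_undef hnot, mul_zero]
  have hf₁ : ∫ ω, Y ω * (f (Y ω) + 1) ∂P = 0 := by
    rw [h (fun x ↦ f x + 1) (hf.add_const 1)
      ⟨C + 1, fun x ↦ (abs_add_le _ _).trans (by simpa using hC x)⟩, integral_undef hnot', mul_zero]
  have hint : Integrable (fun ω ↦ Y ω * f (Y ω)) P :=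
    hY.mul_bdd (hf.comp_aemeasurable hY.aemeasurable).aestronglyMeasurable
      (.of_forall fun ω ↦ hC (Y ω))
  simp only [mul_add, mul_one] at hf₁
  rw [integral_add hint hY, hf₀, zero_add] at hf₁
  exact hY₀ hf₁

lemma integral_mul_le_of_monotone [IsFiniteMeasure P] (h : HasSizeBiasedDistribution P Y Ys)
    (hY : Integrable Y P) (hY₀ : 0 < P[Y]) (hle : ∀ᵐ ω ∂P, Ys ω ≤ Y ω + c) {f : ℝ → ℝ}
    (hf : Monotone f) (hfb : ∃ C, ∀ x, |f x| ≤ C) :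
    ∫ ω, Y ω * f (Y ω) ∂P ≤ P[Y] * ∫ ω, f (Y ω + c) ∂P := by
  rw [h f hf.measurable hfb]
  refine mul_le_mul_of_nonneg_left (integral_mono_ae
    (h.integrable_comp hY hY₀.ne' hf.measurable hfb) ?_ (hle.mono fun ω hω ↦ hf hω)) hY₀.le
  obtain ⟨C, hC⟩ := hfb
  exact .of_bound (hf.measurable.comp_aemeasurable
    (hY.aemeasurable.add_const c)).aestronglyMeasurable C (.of_forall fun ω ↦ hC _)

lemma le_integral_mul_of_antitone [IsFiniteMeasure P] (h : HasSizeBiasedDistribution P Y Ys)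
    (hY : Integrable Y P) (hY₀ : 0 < P[Y]) (hle : ∀ᵐ ω ∂P, Ys ω ≤ Y ω + c) {f : ℝ → ℝ}
    (hf : Antitone f) (hfb : ∃ C, ∀ x, |f x| ≤ C) :
    P[Y] * ∫ ω, f (Y ω + c) ∂P ≤ ∫ ω, Y ω * f (Y ω) ∂P := by
  have hneg := h.integral_mul_le_of_monotone hY hY₀ hle hf.neg (by simpa using hfb)
  simpa only [Pi.neg_apply, mul_neg, integral_neg, neg_le_neg_iff] using hneg

lemma integral_min_mul_exp_le [IsFiniteMeasure P] (h : HasSizeBiasedDistribution P Y Ys)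
    (hY : Integrable Y P) (hY₀ : 0 < P[Y]) (hc : 0 ≤ c) (hle : ∀ᵐ ω ∂P, Ys ω ≤ Y ω + c) (M : ℝ)
    (hθ : 0 ≤ θ) :
    ∫ ω, min (Y ω) M * exp (θ * min (Y ω) M) ∂P ≤
      P[Y] * exp (θ * c) * mgf (fun ω ↦ min (Y ω) M) P θ := by
  have hbound (y : ℝ) : |exp (θ * min y M)| ≤ exp (θ * M) := by
    rw [abs_exp]
    gcongr
    exact min_le_right y M
  have hmono : Monotone fun y ↦ exp (θ * min y M) := fun x y hxy ↦ by dsimp only; gcongr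
  have hint {Z : Ω → ℝ} (hZ : AEMeasurable Z P) : Integrable (fun ω ↦ exp (θ * min (Z ω) M)) P :=
    integrable_exp_mul_of_le θ M hθ (hZ.min aemeasurable_const)
      (.of_forall fun _ ↦ min_le_right _ M)
  have hmul {Z : Ω → ℝ} (hZ : Integrable Z P) :
      Integrable (fun ω ↦ Z ω * exp (θ * min (Y ω) M)) P :=
    hZ.mul_bdd (hint hY.aemeasurable).aestronglyMeasurable (.of_forall fun ω ↦ hbound (Y ω))
  have hmin (y : ℝ) : min (y + c) M ≤ c + min y M := by
    rw [add_comm y c, ← min_add_add_left]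
    exact min_le_min_left _ (le_add_of_nonneg_left hc)
  calc ∫ ω, min (Y ω) M * exp (θ * min (Y ω) M) ∂P
      ≤ ∫ ω, Y ω * exp (θ * min (Y ω) M) ∂P := by
        refine integral_mono (hmul (hY.inf (integrable_const M))) (hmul hY) fun ω ↦ ?_
        dsimp only
        gcongr
        exact min_le_left _ _
    _ ≤ P[Y] * ∫ ω, exp (θ * min (Y ω + c) M) ∂P :=
        h.integral_mul_le_of_monotone hY hY₀ hle hmono ⟨_, hbound⟩
    _ ≤ P[Y] * ∫ ω, exp (θ * c) * exp (θ * min (Y ω) M) ∂P := by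
        refine mul_le_mul_of_nonneg_left (integral_mono (hint (hY.aemeasurable.add_const c))
          ((hint hY.aemeasurable).const_mul _) fun ω ↦ ?_) hY₀.le
        dsimp only
        rw [← exp_add, ← mul_add]
        gcongr
        exact hmin (Y ω)
    _ = P[Y] * exp (θ * c) * mgf (fun ω ↦ min (Y ω) M) P θ := by
        rw [integral_const_mul, mul_assoc, mgf]

lemma le_integral_mul_exp [IsFiniteMeasure P] (h : HasSizeBiasedDistribution P Y Ys)
    (hY_nonneg : ∀ᵐ ω ∂P, 0 ≤ Y ω) (hY : Integrable Y P) (hY₀ : 0 < P[Y]) (hc : 0 ≤ c)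
    (hle : ∀ᵐ ω ∂P, Ys ω ≤ Y ω + c) (hθ : θ ≤ 0) :
    P[Y] * exp (θ * c) * mgf Y P θ ≤ ∫ ω, Y ω * exp (θ * Y ω) ∂P := by
  have hanti : Antitone fun y ↦ exp (θ * max y 0) := fun x y hxy ↦
    exp_le_exp.2 (mul_le_mul_of_nonpos_left (max_le_max_right 0 hxy) hθ)
  have hbound (y : ℝ) : |exp (θ * max y 0)| ≤ 1 := by
    rw [abs_exp, exp_le_one_iff]
    exact mul_nonpos_of_nonpos_of_nonneg hθ (le_max_right y 0)
  calc P[Y] * exp (θ * c) * mgf Y P θ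
      = P[Y] * ∫ ω, exp (θ * c) * exp (θ * Y ω) ∂P := by
        rw [integral_const_mul, mul_assoc, mgf]
    _ = P[Y] * ∫ ω, exp (θ * max (Y ω + c) 0) ∂P := by
        congr 1
        refine integral_congr_ae ?_
        filter_upwards [hY_nonneg] with ω hω
        rw [max_eq_left (add_nonneg hω hc), ← exp_add, ← mul_add, add_comm c]
    _ ≤ ∫ ω, Y ω * exp (θ * max (Y ω) 0) ∂P :=
        h.le_integral_mul_of_antitone hY hY₀ hle hanti ⟨1, hbound⟩
    _ = ∫ ω, Y ω * exp (θ * Y ω) ∂P := by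
        refine integral_congr_ae ?_
        filter_upwards [hY_nonneg] with ω hω
        rw [max_eq_left hω]

variable [IsProbabilityMeasure P]

lemma mgf_min_le (h : HasSizeBiasedDistribution P Y Ys) (hY : Integrable Y P) (hY₀ : 0 < P[Y])
    (hc : 0 < c) (hle : ∀ᵐ ω ∂P, Ys ω ≤ Y ω + c) (M : ℝ) (hθ : 0 ≤ θ) :
    mgf (fun ω ↦ min (Y ω) M) P θ ≤ exp (scaledPoissonCgf P[Y] c θ) :=
  mgf_le_exp_of_integral_mul_exp_le (hY.aemeasurable.min aemeasurable_const)
    (.of_forall fun _ ↦ min_le_right _ M) (hasDerivAt_scaledPoissonCgf hc.ne')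
    scaledPoissonCgf_zero (fun _ hx ↦ h.integral_min_mul_exp_le hY hY₀ hc.le hle M hx) hθ

lemma mgf_le (h : HasSizeBiasedDistribution P Y Ys) (hY_nonneg : ∀ᵐ ω ∂P, 0 ≤ Y ω)
    (hY : Integrable Y P) (hY₀ : 0 < P[Y]) (hc : 0 < c) (hle : ∀ᵐ ω ∂P, Ys ω ≤ Y ω + c)
    (hθ : θ ≤ 0) : mgf Y P θ ≤ exp (scaledPoissonCgf P[Y] c θ) := by
  have hneg : mgf (-Y) P (-θ) ≤ exp (scaledPoissonCgf (-P[Y]) (-c) (-θ)) := by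
    refine mgf_le_exp_of_integral_mul_exp_le hY.aemeasurable.neg
      (hY_nonneg.mono fun ω hω ↦ neg_nonpos.2 hω)
      (hasDerivAt_scaledPoissonCgf (neg_ne_zero.2 hc.ne')) scaledPoissonCgf_zero
      (fun x hx ↦ ?_) (neg_nonneg.2 hθ)
    have hx' := h.le_integral_mul_exp hY_nonneg hY hY₀ hc.le hle (neg_nonpos.2 hx)
    simpa only [mgf_neg, Pi.neg_apply, neg_mul, mul_neg, integral_neg, neg_le_neg_iff] using hx'
  rwa [mgf_neg, scaledPoissonCgf_neg_neg, neg_neg] at hneg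

lemma measureReal_ge_le_exp (h : HasSizeBiasedDistribution P Y Ys) (hY : Integrable Y P)
    (hY₀ : 0 < P[Y]) (hc : 0 < c) (hle : ∀ᵐ ω ∂P, Ys ω ≤ Y ω + c) (y : ℝ) (hθ : 0 ≤ θ) :
    P.real {ω | y ≤ Y ω} ≤ exp (-θ * y + scaledPoissonCgf P[Y] c θ) := by
  have hint : Integrable (fun ω ↦ exp (θ * min (Y ω) y)) P :=
    integrable_exp_mul_of_le θ y hθ (hY.aemeasurable.min aemeasurable_const)
      (.of_forall fun _ ↦ min_le_right _ y)
  calc P.real {ω | y ≤ Y ω} = P.real {ω | y ≤ min (Y ω) y} := by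
        simp only [le_min_iff, le_refl, and_true]
    _ ≤ exp (-θ * y) * mgf (fun ω ↦ min (Y ω) y) P θ := measure_ge_le_exp_mul_mgf y hθ hint
    _ ≤ exp (-θ * y) * exp (scaledPoissonCgf P[Y] c θ) := by
        gcongr
        exact h.mgf_min_le hY hY₀ hc hle y hθ
    _ = exp (-θ * y + scaledPoissonCgf P[Y] c θ) := (exp_add _ _).symm

lemma measureReal_le_le_exp (h : HasSizeBiasedDistribution P Y Ys)
    (hY_nonneg : ∀ᵐ ω ∂P, 0 ≤ Y ω) (hY : Integrable Y P) (hY₀ : 0 < P[Y]) (hc : 0 < c)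
    (hle : ∀ᵐ ω ∂P, Ys ω ≤ Y ω + c) (y : ℝ) (hθ : θ ≤ 0) :
    P.real {ω | Y ω ≤ y} ≤ exp (-θ * y + scaledPoissonCgf P[Y] c θ) := by
  have hint : Integrable (fun ω ↦ exp (θ * Y ω)) P := by
    simpa using integrable_exp_mul_of_le (-θ) 0 (neg_nonneg.2 hθ) hY.aemeasurable.neg
      (hY_nonneg.mono fun ω hω ↦ neg_nonpos.2 hω)
  calc P.real {ω | Y ω ≤ y} ≤ exp (-θ * y) * mgf Y P θ := measure_le_le_exp_mul_mgf y hθ hint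
    _ ≤ exp (-θ * y) * exp (scaledPoissonCgf P[Y] c θ) := by
        gcongr
        exact h.mgf_le hY_nonneg hY hY₀ hc hle hθ
    _ = exp (-θ * y + scaledPoissonCgf P[Y] c θ) := (exp_add _ _).symm

lemma measureReal_ge_le (h : HasSizeBiasedDistribution P Y Ys) (hY : Integrable Y P)
    (hY₀ : 0 < P[Y]) (hc : 0 < c) (hle : ∀ᵐ ω ∂P, Ys ω ≤ Y ω + c) {y : ℝ} (hy : P[Y] ≤ y) :
    P.real {ω | y ≤ Y ω} ≤ (P[Y] / y) ^ (y / c) * exp ((y - P[Y]) / c) := by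
  rw [← exp_neg_mul_add_scaledPoissonCgf_log_div hY₀ hc.ne' (hY₀.trans_le hy)]
  exact h.measureReal_ge_le_exp hY hY₀ hc hle y
    (div_nonneg (log_nonneg ((one_le_div hY₀).2 hy)) hc.le)

lemma measureReal_le_zero_le (h : HasSizeBiasedDistribution P Y Ys)
    (hY_nonneg : ∀ᵐ ω ∂P, 0 ≤ Y ω) (hY : Integrable Y P) (hY₀ : 0 < P[Y]) (hc : 0 < c)
    (hle : ∀ᵐ ω ∂P, Ys ω ≤ Y ω + c) :
    P.real {ω | Y ω ≤ 0} ≤ exp (-P[Y] / c) := by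
  refine ge_of_tendsto (tendsto_scaledPoissonCgf_atBot hc).rexp ?_
  filter_upwards [eventually_le_atBot 0] with θ hθ
  simpa using h.measureReal_le_le_exp hY_nonneg hY hY₀ hc hle 0 hθ

lemma measureReal_le_le (h : HasSizeBiasedDistribution P Y Ys)
    (hY_nonneg : ∀ᵐ ω ∂P, 0 ≤ Y ω) (hY : Integrable Y P) (hY₀ : 0 < P[Y]) (hc : 0 < c)
    (hle : ∀ᵐ ω ∂P, Ys ω ≤ Y ω + c) {y : ℝ} (hy₀ : 0 ≤ y) (hy : y ≤ P[Y]) :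
    P.real {ω | Y ω ≤ y} ≤ (P[Y] / y) ^ (y / c) * exp ((y - P[Y]) / c) := by
  rcases hy₀.eq_or_lt with rfl | hy₀
  · simpa using h.measureReal_le_zero_le hY_nonneg hY hY₀ hc hle
  · rw [← exp_neg_mul_add_scaledPoissonCgf_log_div hY₀ hc.ne' hy₀]
    exact h.measureReal_le_le_exp hY_nonneg hY hY₀ hc hle y (div_nonpos_of_nonpos_of_nonneg
      (log_nonpos (div_pos hy₀ hY₀).le ((div_le_one hY₀).2 hy)) hc.le)

end HasSizeBiasedDistribution

/-- Sub-Poisson two-sided bound from a size bias coupling bounded above: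
if `Ys ≤ Y + c` a.s. then both tails of `Y - μ` satisfy the bound
`(μ/(μ+t))^((t+μ)/c) e^(t/c)`. -/
theorem tails_of_upper_bounded_size_bias_coupling
    {Ω : Type*} [MeasurableSpace Ω] (P : Measure Ω) [IsProbabilityMeasure P]
    (Y Ys : Ω → ℝ) (hYnonneg : ∀ᵐ ω ∂P, 0 ≤ Y ω) (hYint : Integrable Y P)
    (μ : ℝ) (hμ : μ = ∫ ω, Y ω ∂P) (hμne : μ ≠ 0)
    (c : ℝ) (hc : 0 < c)
    (hsb : HasSizeBiasedDistribution P Y Ys)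
    (hbdd : ∀ᵐ ω ∂P, Ys ω ≤ Y ω + c) :
    (∀ t : ℝ, 0 ≤ t →
      (P {ω | t ≤ Y ω - μ}).toReal ≤ (μ / (μ + t)) ^ ((t + μ) / c) * Real.exp (t / c)) ∧
    (∀ t : ℝ, -μ ≤ t → t ≤ 0 →
      (P {ω | Y ω - μ ≤ t}).toReal ≤ (μ / (μ + t)) ^ ((t + μ) / c) * Real.exp (t / c)) := by
  have hμpos : 0 < μ := (hμ ▸ integral_nonneg_of_ae hYnonneg : 0 ≤ μ).lt_of_ne' hμne
  subst hμ
  refine ⟨fun t ht ↦ ?_, fun t ht₁ ht₂ ↦ ?_⟩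
  · have htail := hsb.measureReal_ge_le hYint hμpos hc hbdd (le_add_of_nonneg_right ht)
    simpa only [Measure.real, le_sub_iff_add_le', add_sub_cancel_left, add_comm t] using htail
  · have htail := hsb.measureReal_le_le hYnonneg hYint hμpos hc hbdd
      (neg_le_iff_add_nonneg'.1 ht₁) (add_le_of_nonpos_right ht₂)
    simpa only [Measure.real, sub_le_iff_le_add', add_sub_cancel_left, add_comm t] using htail
end

section
/- Let M be a lattice log concave integer-valued random variable with support S, and fix d ∈ ℤ with P(M = d) < 1. Let Z₊, Z₋ be conditionally independent given M, with conditional distributions Bern(π_M^{(d)}) and Bern(ρ_M^{(d)}) respectively, and let Z be independent of (Z₊, Z₋, M) with distribution Bern(q), where q = P(M ≥ d+1)/P(M ≠ d). Set X = Z·Z₊ − (1 − Z)·Z₋. Then M + X has the conditional distribution of M given M ≠ d. -/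
open MeasureTheory ProbabilityTheory

/-- The law of a lattice log concave integer valued random variable, presented as a
probability measure `μ` on `ℤ`: the support is an integer interval and the point
masses satisfy `p_{x-1} p_{x+1} ≤ p_x ^ 2`. -/
def IsLatticeLogConcave (μ : Measure ℤ) : Prop :=
  (∀ x y z : ℤ, x ≤ y → y ≤ z → μ {x} ≠ 0 → μ {z} ≠ 0 → μ {y} ≠ 0) ∧
  (∀ x : ℤ, (μ {x - 1}).toReal * (μ {x + 1}).toReal ≤ (μ {x}).toReal ^ 2)

/-- `π_x^{(d)} = P(M ≥ x+1) P(M = d) / (P(M ≥ d+1) P(M = x))` when `x` and `d+1` are in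
the support of `μ` and `x ≥ d`, and `0` otherwise. -/
noncomputable def piCoef (μ : Measure ℤ) (d x : ℤ) : ℝ :=
  if μ {x} ≠ 0 ∧ μ {d + 1} ≠ 0 ∧ d ≤ x then
    ((μ (Set.Ici (x + 1))).toReal * (μ {d}).toReal) /
      ((μ (Set.Ici (d + 1))).toReal * (μ {x}).toReal)
  else 0

/-- `ρ_x^{(d)} = P(M ≤ x-1) P(M = d) / (P(M ≤ d-1) P(M = x))` when `x` and `d-1` are in
the support of `μ` and `x ≤ d`, and `0` otherwise. -/
noncomputable def rhoCoef (μ : Measure ℤ) (d x : ℤ) : ℝ :=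
  if μ {x} ≠ 0 ∧ μ {d - 1} ≠ 0 ∧ x ≤ d then
    ((μ (Set.Iic (x - 1))).toReal * (μ {d}).toReal) /
      ((μ (Set.Iic (d - 1))).toReal * (μ {x}).toReal)
  else 0

/-- The Bernoulli mass function: `bern p 1 = p`, `bern p 0 = 1 - p`, else `0`. -/
noncomputable def bern (p : ℝ) (b : ℤ) : ℝ :=
  if b = 1 then p else if b = 0 then 1 - p else 0

/-!
Condition on the value of `Z`. Given `Z = 1` the variable is `M + Z₊`, and given `Z = 0` it is
`M - Z₋`. Let `μ` be the law of `M`. The flux of mass from `x` to `x + 1` caused by `Z₊` is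
`π_x μ {x} = μ (x, ∞) μ {d} / μ (d, ∞)` for `x ≥ d`, and the differences of these fluxes give

  `μ (d, ∞) • law (M + Z₊) = μ (d, ∞) • μ|(-∞, d) + μ [d, ∞) • μ|(d, ∞)`.

Reflecting `ℤ` exchanges `π` with `ρ` and gives the mirror image for `M - Z₋`. In the sum of the two
identities each of `μ|(-∞, d)` and `μ|(d, ∞)` has total weight `1`, so the sum is `μ|{d}ᶜ`.
-/

open Set

section Fibers

variable {Ω α β : Type*} [MeasurableSpace Ω] [MeasurableSpace α] [MeasurableSpace β]
  {P : Measure Ω}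

lemma sum_measureReal_fiber_inter [MeasurableSingletonClass α] [IsFiniteMeasure P]
    {f : Ω → α} (hf : Measurable f) {s : Finset α} (hs : ∀ ω, f ω ∈ s) (E : Set Ω) :
    ∑ a ∈ s, P.real (f ⁻¹' {a} ∩ E) = P.real E := by
  have hfib : ∀ a ∈ s, MeasurableSet (f ⁻¹' {a}) := fun a _ => hf (measurableSet_singleton a)
  have hrestrict := sum_measureReal_preimage_singleton (μ := P.restrict E) s hfib
  have huniv : f ⁻¹' s = univ := eq_univ_of_forall hs
  rw [huniv, measureReal_restrict_apply_univ] at hrestrict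
  rw [← hrestrict]
  exact Finset.sum_congr rfl fun a ha => (measureReal_restrict_apply (hfib a ha)).symm

lemma indepFun_of_measure_inter_fiber [Countable α] [Countable β] [MeasurableSingletonClass α]
    [MeasurableSingletonClass β] [IsFiniteMeasure P] {f : Ω → α} {g : Ω → β}
    (hf : Measurable f) (hg : Measurable g)
    (h : ∀ a b, P (f ⁻¹' {a} ∩ g ⁻¹' {b}) = P (f ⁻¹' {a}) * P (g ⁻¹' {b})) :
    IndepFun f g P := by
  rw [indepFun_iff_map_prod_eq_prod_map_map hf.aemeasurable hg.aemeasurable]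
  refine Measure.ext_of_singleton fun ⟨a, b⟩ => ?_
  rw [Measure.map_apply (hf.prodMk hg) (measurableSet_singleton _), ← singleton_prod_singleton,
    Measure.prod_prod, Measure.map_apply hf (measurableSet_singleton a),
    Measure.map_apply hg (measurableSet_singleton b), ← h]
  rfl

lemma indepFun_triple_of_measure_inter_fiber {γ δ : Type*} [MeasurableSpace γ] [MeasurableSpace δ]
    [Countable α] [Countable β] [Countable γ] [Countable δ] [MeasurableSingletonClass α]
    [MeasurableSingletonClass β] [MeasurableSingletonClass γ] [MeasurableSingletonClass δ]
    [IsFiniteMeasure P] {f : Ω → α} {g₁ : Ω → β} {g₂ : Ω → γ} {g₃ : Ω → δ} (hf : Measurable f)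
    (hg₁ : Measurable g₁) (hg₂ : Measurable g₂) (hg₃ : Measurable g₃)
    (h : ∀ a b₁ b₂ b₃, P (f ⁻¹' {a} ∩ (g₁ ⁻¹' {b₁} ∩ g₂ ⁻¹' {b₂} ∩ g₃ ⁻¹' {b₃})) =
      P (f ⁻¹' {a}) * P (g₁ ⁻¹' {b₁} ∩ g₂ ⁻¹' {b₂} ∩ g₃ ⁻¹' {b₃})) :
    IndepFun f (fun ω => (g₁ ω, g₂ ω, g₃ ω)) P := by
  refine indepFun_of_measure_inter_fiber hf (by fun_prop) fun a ⟨b₁, b₂, b₃⟩ => ?_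
  have hfiber : (fun ω => (g₁ ω, g₂ ω, g₃ ω)) ⁻¹' {(b₁, b₂, b₃)} =
      g₁ ⁻¹' {b₁} ∩ g₂ ⁻¹' {b₂} ∩ g₃ ⁻¹' {b₃} := by
    ext ω; simp [and_assoc]
  rw [hfiber, h]

lemma map_eq_smul_map_add_smul_map {Z : Ω → ℤ} {U V Y : Ω → α} (hZ : Measurable Z)
    (hU : Measurable U) (hV : Measurable V) (hY : Measurable Y) (hZ01 : ∀ ω, Z ω = 0 ∨ Z ω = 1)
    (hYU : ∀ ω, Z ω = 1 → Y ω = U ω) (hYV : ∀ ω, Z ω = 0 → Y ω = V ω)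
    (hZU : IndepFun Z U P) (hZV : IndepFun Z V P) :
    P.map Y = P (Z ⁻¹' {1}) • P.map U + P (Z ⁻¹' {0}) • P.map V := by
  ext s hs
  have hone : Y ⁻¹' s ∩ Z ⁻¹' {1} = Z ⁻¹' {1} ∩ U ⁻¹' s := by
    ext ω; simp +contextual [hYU, and_comm]
  have hzero : Y ⁻¹' s \ Z ⁻¹' {1} = Z ⁻¹' {0} ∩ V ⁻¹' s := by
    ext ω; rcases hZ01 ω with h | h <;> simp [h, hYV]
  rw [Measure.map_apply hY hs, ← measure_inter_add_sdiff _ (hZ (measurableSet_singleton 1)), hone,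
    hzero, hZU.measure_inter_preimage_eq_mul _ _ (measurableSet_singleton 1) hs,
    hZV.measure_inter_preimage_eq_mul _ _ (measurableSet_singleton 0) hs]
  simp [Measure.map_apply hU hs, Measure.map_apply hV hs]

end Fibers

section JointBernoulli

lemma sum_bern (p : ℝ) : ∑ b ∈ {0, 1}, bern p b = 1 := by
  simp [bern]

lemma sum_bern_mul_bern (p q : ℝ) :
    ∑ b ∈ ({0, 1} ×ˢ {0, 1} : Finset (ℤ × ℤ)), bern p b.1 * bern q b.2 = 1 := by
  rw [Finset.sum_product, ← Finset.sum_mul_sum, sum_bern, sum_bern, one_mul]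

lemma nonneg_of_sum_max_zero_eq_sum {ι : Type*} {s : Finset ι} {f : ι → ℝ}
    (h : ∑ i ∈ s, max (f i) 0 = ∑ i ∈ s, f i) : ∀ i ∈ s, 0 ≤ f i := fun i hi =>
  (le_max_right (f i) 0).trans_eq <|
    ((Finset.sum_eq_sum_iff_of_le fun j _ => le_max_left (f j) 0).1 h.symm i hi).symm

variable {Ω : Type*} [MeasurableSpace Ω] {P : Measure Ω} [IsFiniteMeasure P] {A B : Ω → ℤ}

-- The weights `bern a b₁ * bern b b₂` sum to `1`, and so do their positive parts by total mass, so
-- `ENNReal.ofReal` truncates nothing unless `E` is null.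
lemma measureReal_fiber_one_inter_of_joint_bern (hA : Measurable A) (hB : Measurable B)
    (hA01 : ∀ ω, A ω = 0 ∨ A ω = 1) (hB01 : ∀ ω, B ω = 0 ∨ B ω = 1) {E : Set Ω} {a b : ℝ}
    (hjoint : ∀ b₁ b₂ : ℤ, P (A ⁻¹' {b₁} ∩ B ⁻¹' {b₂} ∩ E) =
      ENNReal.ofReal (bern a b₁ * bern b b₂) * P E) :
    P.real (A ⁻¹' {1} ∩ E) = a * P.real E := by
  by_cases hE : P.real E = 0
  · rw [hE, mul_zero]
    exact measureReal_mono_null inter_subset_right hE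
  replace hjoint (b₁ b₂ : ℤ) : P.real (B ⁻¹' {b₂} ∩ (A ⁻¹' {b₁} ∩ E)) =
      max (bern a b₁ * bern b b₂) 0 * P.real E := by
    rw [inter_left_comm, ← inter_assoc, measureReal_def, hjoint, ENNReal.toReal_mul,
      ENNReal.toReal_ofReal', measureReal_def]
  have hmarginal (b₁ : ℤ) : ∑ b₂ ∈ {0, 1}, max (bern a b₁ * bern b b₂) 0 * P.real E =
      P.real (A ⁻¹' {b₁} ∩ E) := by
    simp_rw [← hjoint]
    exact sum_measureReal_fiber_inter hB (by simpa using hB01) _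
  have htotal : ∑ i ∈ ({0, 1} ×ˢ {0, 1} : Finset (ℤ × ℤ)), max (bern a i.1 * bern b i.2) 0 = 1 := by
    refine mul_right_cancel₀ hE ?_
    rw [one_mul, Finset.sum_mul, Finset.sum_product, Finset.sum_congr rfl fun b₁ _ => hmarginal b₁]
    exact sum_measureReal_fiber_inter hA (by simpa using hA01) E
  have hnonneg := nonneg_of_sum_max_zero_eq_sum (htotal.trans (sum_bern_mul_bern a b).symm)
  calc P.real (A ⁻¹' {1} ∩ E)
      = ∑ b₂ ∈ {0, 1}, bern a 1 * bern b b₂ * P.real E := by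
        rw [← hmarginal]
        refine Finset.sum_congr rfl fun b₂ hb₂ => ?_
        rw [max_eq_left (hnonneg (1, b₂) (by simpa using hb₂))]
    _ = a * P.real E := by
        rw [← Finset.sum_mul, ← Finset.mul_sum, sum_bern]
        simp [bern]

end JointBernoulli

section Coefficients

variable {μ : Measure ℤ} {d x : ℤ}

lemma IsLatticeLogConcave.ordConnected_support (h : IsLatticeLogConcave μ) :
    OrdConnected {x | μ {x} ≠ 0} :=
  ⟨fun x hx z hz y hy => h.1 x y z hy.1 hy.2 hx hz⟩

lemma measure_Ioi_eq_zero_of_ordConnected_support {α : Type*} [LinearOrder α] [Countable α]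
    [MeasurableSpace α] {μ : Measure α} (hsupp : OrdConnected {x | μ {x} ≠ 0}) {d x : α}
    (hdx : d ≤ x) (hd : μ {d} ≠ 0) (hx : μ {x} = 0) : μ (Ioi x) = 0 := by
  rw [← biUnion_of_singleton (Ioi x), measure_biUnion_null_iff (to_countable _)]
  intro y hxy
  by_contra hy
  exact hsupp.out hd hy ⟨hdx, (mem_Ioi.1 hxy).le⟩ hx

lemma measureReal_Ici_eq_add_Ioi {α : Type*} [PartialOrder α] [MeasurableSpace α]
    [MeasurableSingletonClass α] {μ : Measure α} [IsFiniteMeasure μ] (x : α) :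
    μ.real (Ici x) = μ.real {x} + μ.real (Ioi x) := by
  rw [← Ioi_union_left, union_comm,
    measureReal_union' (by simp) (measurableSet_singleton x)]

lemma piCoef_of_lt (hxd : x < d) : piCoef μ d x = 0 :=
  if_neg fun h => h.2.2.not_gt hxd

lemma measureReal_Ioi_mul_piCoef_mul [IsFiniteMeasure μ] (hsupp : OrdConnected {x | μ {x} ≠ 0})
    (hdx : d ≤ x) :
    μ.real (Ioi d) * (piCoef μ d x * μ.real {x}) = μ.real (Ioi x) * μ.real {d} := by
  have hreal {s : Set ℤ} (hs : μ s = 0) : μ.real s = 0 := (measureReal_eq_zero_iff).2 hs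
  by_cases hd : μ {d} = 0
  · have hcoef : piCoef μ d x = 0 := by simp [piCoef, hd]
    rw [hcoef, hreal hd, zero_mul, mul_zero, mul_zero]
  by_cases hd1 : μ {d + 1} = 0
  · have htail : μ.real (Ioi d) = 0 := by
      rw [← Ici_add_one_eq_Ioi, measureReal_Ici_eq_add_Ioi, hreal hd1,
        hreal (measure_Ioi_eq_zero_of_ordConnected_support hsupp (by lia) hd hd1), add_zero]
    rw [htail, measureReal_mono_null (Ioi_subset_Ioi hdx) htail, zero_mul, zero_mul]
  by_cases hx : μ {x} = 0
  · rw [hreal hx, hreal (measure_Ioi_eq_zero_of_ordConnected_support hsupp hdx hd hx), mul_zero,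
      mul_zero, zero_mul]
  have hx_ne : μ.real {x} ≠ 0 := (measureReal_ne_zero_iff).2 hx
  have htail_ne : μ.real (Ioi d) ≠ 0 := fun h => hd1 <| (measureReal_eq_zero_iff).1 <|
    measureReal_mono_null (by simp) h
  simp only [piCoef, if_pos (show _ ∧ _ ∧ _ from ⟨hx, hd1, hdx⟩), Ici_add_one_eq_Ioi,
    ← measureReal_def]
  field_simp

end Coefficients

section Reflection

variable {G : Type*} [MeasurableSpace G]

lemma neg_add_measure [Neg G] [MeasurableNeg G] (μ ν : Measure G) : (μ + ν).neg = μ.neg + ν.neg :=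
  Measure.map_add μ ν measurable_neg

lemma neg_smul_measure [Neg G] (c : ENNReal) (μ : Measure G) : (c • μ).neg = c • μ.neg :=
  Measure.map_smul c μ Neg.neg

lemma neg_restrict_neg [InvolutiveNeg G] [MeasurableNeg G] (μ : Measure G) (s : Set G) :
    (μ.neg.restrict s).neg = μ.restrict (-s) := by
  ext t ht
  simp [Measure.restrict_apply ht, Measure.restrict_apply ht.neg]

lemma rhoCoef_eq_piCoef_neg (μ : Measure ℤ) (d x : ℤ) :
    rhoCoef μ d x = piCoef μ.neg (-d) (-x) := by
  have hsucc (y : ℤ) : -y + 1 = -(y - 1) := by ring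
  simp only [rhoCoef, piCoef, Measure.neg_apply, hsucc, neg_singleton, neg_Ici, neg_neg,
    neg_le_neg_iff]

end Reflection

section Shift

lemma measure_Ioi_smul_eq_of_flux {μ ν : Measure ℤ} [IsFiniteMeasure μ] [IsFiniteMeasure ν] {d : ℤ}
    (hsupp : OrdConnected {x | μ {x} ≠ 0})
    (hflux : ∀ x, ν.real {x} = μ.real {x} - piCoef μ d x * μ.real {x} +
      piCoef μ d (x - 1) * μ.real {x - 1}) :
    μ (Ioi d) • ν = μ (Ioi d) • μ.restrict (Iio d) + μ (Ici d) • μ.restrict (Ioi d) := by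
  have hsmul (s : Set ℤ) (κ : Measure ℤ) [IsFiniteMeasure κ] : IsFiniteMeasure (μ s • κ) :=
    κ.smul_finite (measure_ne_top μ s)
  refine Measure.ext_of_measureReal_singleton fun x => ?_
  rw [measureReal_add_apply]
  simp only [measureReal_ennreal_smul_apply, measureReal_restrict_apply (measurableSet_singleton x),
    ← measureReal_def, hflux]
  rcases lt_trichotomy x d with h | rfl | h
  · simp [piCoef_of_lt h, piCoef_of_lt (show x - 1 < d by lia), h, h.le]
  · have hout := measureReal_Ioi_mul_piCoef_mul hsupp (le_refl x)
    simp only [piCoef_of_lt (sub_one_lt x), singleton_inter_eq_empty.2 self_notMem_Iio,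
      singleton_inter_eq_empty.2 self_notMem_Ioi, measureReal_empty]
    linear_combination -hout
  · have hout := measureReal_Ioi_mul_piCoef_mul hsupp h.le
    have hin := measureReal_Ioi_mul_piCoef_mul hsupp (show d ≤ x - 1 by lia)
    have htail_d := measureReal_Ici_eq_add_Ioi (μ := μ) d
    have htail_x := measureReal_Ici_eq_add_Ioi (μ := μ) x
    rw [← Ici_add_one_eq_Ioi (x - 1), sub_add_cancel] at hin
    rw [singleton_inter_eq_empty.2 (notMem_Iio.2 h.le), singleton_inter_of_mem (mem_Ioi.2 h),
      measureReal_empty]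
    linear_combination hin - hout - μ.real {x} * htail_d + μ.real {d} * htail_x

variable {Ω : Type*} [MeasurableSpace Ω] {P : Measure Ω} [IsFiniteMeasure P] {M A : Ω → ℤ} {d : ℤ}

lemma measureReal_fiber_add (hA : Measurable A) (hA01 : ∀ ω, A ω = 0 ∨ A ω = 1) (x : ℤ) :
    P.real ((M + A) ⁻¹' {x}) = P.real (M ⁻¹' {x}) - P.real (A ⁻¹' {1} ∩ M ⁻¹' {x}) +
      P.real (A ⁻¹' {1} ∩ M ⁻¹' {x - 1}) := by
  have hsplit (E : Set Ω) := sum_measureReal_fiber_inter (P := P) hA (s := {0, 1})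
    (by simpa using hA01) E
  simp only [Finset.sum_pair zero_ne_one] at hsplit
  have hstay : A ⁻¹' {0} ∩ (M + A) ⁻¹' {x} = A ⁻¹' {0} ∩ M ⁻¹' {x} := by
    ext ω; simp +contextual
  have hmove : A ⁻¹' {1} ∩ (M + A) ⁻¹' {x} = A ⁻¹' {1} ∩ M ⁻¹' {x - 1} := by
    ext ω; simp +contextual [eq_sub_iff_add_eq]
  rw [← hsplit ((M + A) ⁻¹' {x}), ← hsplit (M ⁻¹' {x}), hstay, hmove]
  ring

lemma measure_Ioi_smul_map_add (hM : Measurable M) (hA : Measurable A)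
    (hA01 : ∀ ω, A ω = 0 ∨ A ω = 1) (hsupp : OrdConnected {x | P.map M {x} ≠ 0})
    (hA1 : ∀ n, P.real (A ⁻¹' {1} ∩ M ⁻¹' {n}) = piCoef (P.map M) d n * P.real (M ⁻¹' {n})) :
    P.map M (Ioi d) • P.map (M + A) =
      P.map M (Ioi d) • (P.map M).restrict (Iio d) +
        P.map M (Ici d) • (P.map M).restrict (Ioi d) := by
  refine measure_Ioi_smul_eq_of_flux hsupp fun x => ?_
  simp only [map_measureReal_apply (hM.add hA) (measurableSet_singleton x),
    map_measureReal_apply hM (measurableSet_singleton _), measureReal_fiber_add hA hA01, hA1]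

lemma measure_Iio_smul_map_sub (hM : Measurable M) (hA : Measurable A)
    (hA01 : ∀ ω, A ω = 0 ∨ A ω = 1) (hsupp : OrdConnected {x | P.map M {x} ≠ 0})
    (hA1 : ∀ n, P.real (A ⁻¹' {1} ∩ M ⁻¹' {n}) = rhoCoef (P.map M) d n * P.real (M ⁻¹' {n})) :
    P.map M (Iio d) • P.map (M - A) =
      P.map M (Iio d) • (P.map M).restrict (Ioi d) +
        P.map M (Iic d) • (P.map M).restrict (Iio d) := by
  have hmap_neg {f : Ω → ℤ} (hf : Measurable f) : P.map (-f) = (P.map f).neg :=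
    (Measure.map_map measurable_neg hf).symm
  have hfiber (n : ℤ) : (-M) ⁻¹' {n} = M ⁻¹' {-n} := by ext ω; simp [neg_eq_iff_eq_neg]
  have hreflected := measure_Ioi_smul_map_add (P := P) (M := -M) (d := -d) hM.neg hA hA01
    (by
      simp only [hmap_neg hM, Measure.neg_apply, neg_singleton]
      exact hsupp.preimage_anti fun _ _ => neg_le_neg)
    (fun n => by rw [hfiber, hA1, rhoCoef_eq_piCoef_neg, neg_neg, hmap_neg hM])
  rw [neg_add_eq_sub, ← neg_sub M A, hmap_neg hM, hmap_neg (hM.sub hA)] at hreflected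
  simpa [neg_add_measure, neg_smul_measure, neg_restrict_neg] using
    congrArg Measure.neg hreflected

end Shift

section Complement

variable {α : Type*} [LinearOrder α] [TopologicalSpace α] [OrderClosedTopology α]
  [MeasurableSpace α] [OpensMeasurableSpace α] {μ : Measure α} [IsProbabilityMeasure μ] {d : α}

lemma one_sub_measure_Ioi_div_compl_singleton (hd : μ {d} < 1) :
    1 - μ (Ioi d) / μ {d}ᶜ = μ (Iio d) / μ {d}ᶜ := by
  have hsplit : μ (Iio d) + μ (Ioi d) = μ {d}ᶜ := by
    rw [← Iio_union_Ioi, measure_union (Ioi_disjoint_Iio_of_le le_rfl).symm measurableSet_Ioi]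
  have hpos : μ {d}ᶜ ≠ 0 := by
    rw [Ne, prob_compl_eq_zero_iff (measurableSet_singleton d)]
    exact hd.ne
  refine ENNReal.sub_eq_of_eq_add (ENNReal.div_ne_top (measure_ne_top μ _) hpos) ?_
  rw [ENNReal.div_add_div_same, hsplit, ENNReal.div_self hpos (measure_ne_top μ _)]

lemma smul_restrict_Iio_add_smul_restrict_Ioi :
    μ (Ioi d) • μ.restrict (Iio d) + μ (Ici d) • μ.restrict (Ioi d) +
      (μ (Iio d) • μ.restrict (Ioi d) + μ (Iic d) • μ.restrict (Iio d)) = μ.restrict {d}ᶜ := by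
  have hbelow : μ (Ioi d) + μ (Iic d) = 1 := by
    rw [← compl_Ioi, prob_add_prob_compl measurableSet_Ioi]
  have habove : μ (Ici d) + μ (Iio d) = 1 := by
    rw [← compl_Ici, prob_add_prob_compl measurableSet_Ici]
  calc _ = (μ (Ioi d) + μ (Iic d)) • μ.restrict (Iio d) +
        (μ (Ici d) + μ (Iio d)) • μ.restrict (Ioi d) := by
        rw [add_smul, add_smul]; abel
    _ = μ.restrict {d}ᶜ := by
        rw [hbelow, habove, one_smul, one_smul, ← Iio_union_Ioi,
          Measure.restrict_union (Ioi_disjoint_Iio_of_le le_rfl).symm measurableSet_Ioi]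

end Complement

theorem ne_coupling_of_latticeLogConcave_general
    {Ω : Type*} [MeasurableSpace Ω] (P : Measure Ω) [IsProbabilityMeasure P]
    (M Zp Zm Z : Ω → ℤ)
    (hM : Measurable M) (hZp : Measurable Zp) (hZm : Measurable Zm) (hZ : Measurable Z)
    (hsupp : OrdConnected {x | P.map M {x} ≠ 0})
    (d : ℤ) (hd : P (M ⁻¹' {d}) < 1)
    (hZp01 : ∀ ω, Zp ω = 0 ∨ Zp ω = 1) (hZm01 : ∀ ω, Zm ω = 0 ∨ Zm ω = 1)
    (hZ01 : ∀ ω, Z ω = 0 ∨ Z ω = 1)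
    (hpi : ∀ n, P.real (Zp ⁻¹' {1} ∩ M ⁻¹' {n}) = piCoef (P.map M) d n * P.real (M ⁻¹' {n}))
    (hrho : ∀ n, P.real (Zm ⁻¹' {1} ∩ M ⁻¹' {n}) = rhoCoef (P.map M) d n * P.real (M ⁻¹' {n}))
    (hq : P (Z ⁻¹' {1}) = P (M ⁻¹' Ioi d) / P (M ⁻¹' {d}ᶜ))
    (hindp : IndepFun Z (fun ω => (Zp ω, M ω)) P) (hindm : IndepFun Z (fun ω => (Zm ω, M ω)) P) :
    P.map (fun ω => M ω + (Z ω * Zp ω - (1 - Z ω) * Zm ω)) = (P.map M)[|{d}ᶜ] := by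
  have := Measure.isProbabilityMeasure_map (μ := P) hM.aemeasurable
  have hlaw (s : Set ℤ) : P (M ⁻¹' s) = P.map M s :=
    (Measure.map_apply hM MeasurableSet.of_discrete).symm
  rw [hlaw] at hd
  rw [hlaw, hlaw] at hq
  have hq_compl : P (Z ⁻¹' {0}) = P.map M (Iio d) / P.map M {d}ᶜ := by
    have hcompl : Z ⁻¹' {0} = (Z ⁻¹' {1})ᶜ := by
      ext ω; rcases hZ01 ω with h | h <;> simp [h]
    rw [hcompl, prob_compl_eq_one_sub (hZ (measurableSet_singleton 1)), hq]
    exact one_sub_measure_Ioi_div_compl_singleton hd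
  calc P.map (fun ω => M ω + (Z ω * Zp ω - (1 - Z ω) * Zm ω))
      = P (Z ⁻¹' {1}) • P.map (M + Zp) + P (Z ⁻¹' {0}) • P.map (M - Zm) :=
        map_eq_smul_map_add_smul_map hZ (hM.add hZp) (hM.sub hZm) (by fun_prop) hZ01
          (fun ω h => by simp [h]) (fun ω h => by simp [h, sub_eq_add_neg])
          (hindp.comp measurable_id (measurable_snd.add measurable_fst))
          (hindm.comp measurable_id (measurable_snd.sub measurable_fst))
    _ = (P.map M {d}ᶜ)⁻¹ •
          (P.map M (Ioi d) • P.map (M + Zp) + P.map M (Iio d) • P.map (M - Zm)) := by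
        rw [hq, hq_compl, ENNReal.div_eq_inv_mul, ENNReal.div_eq_inv_mul, mul_smul, mul_smul,
          smul_add]
    _ = (P.map M)[|{d}ᶜ] := by
        rw [measure_Ioi_smul_map_add hM hZp hZp01 hsupp hpi,
          measure_Iio_smul_map_sub hM hZm hZm01 hsupp hrho,
          smul_restrict_Iio_add_smul_restrict_Ioi]
        rfl

/-- Coupling of a lattice log concave `M` to a variable with the law of `M` conditioned
on `M ≠ d`: with `Z₊, Z₋` conditionally independent given `M`, conditionally Bernoulli
with success probabilities `π_M^{(d)}` and `ρ_M^{(d)}`, and `Z` an independent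
`Bern(q)` coin with `q = P(M ≥ d+1)/P(M ≠ d)`, the variable
`M + Z Z₊ - (1 - Z) Z₋` has the law of `M` conditioned on `M ≠ d`. -/
theorem ne_coupling_of_latticeLogConcave
    {Ω : Type*} [MeasurableSpace Ω] (P : Measure Ω) [IsProbabilityMeasure P]
    (M Zp Zm Z : Ω → ℤ)
    (hMmeas : Measurable M) (hZpmeas : Measurable Zp)
    (hZmmeas : Measurable Zm) (hZmeas : Measurable Z)
    (hLC : IsLatticeLogConcave (Measure.map M P))
    (d : ℤ) (hd : P {ω | M ω = d} < 1)
    (hZp01 : ∀ ω, Zp ω = 0 ∨ Zp ω = 1) (hZm01 : ∀ ω, Zm ω = 0 ∨ Zm ω = 1)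
    (hZ01 : ∀ ω, Z ω = 0 ∨ Z ω = 1)
    -- `Z₊` and `Z₋` are conditionally independent given `M`, with conditional laws
    -- `Bern(π_M^{(d)})` and `Bern(ρ_M^{(d)})` respectively:
    (hcond : ∀ n b₁ b₂ : ℤ,
      P ({ω | Zp ω = b₁} ∩ {ω | Zm ω = b₂} ∩ {ω | M ω = n}) =
        ENNReal.ofReal (bern (piCoef (Measure.map M P) d n) b₁ *
          bern (rhoCoef (Measure.map M P) d n) b₂) * P {ω | M ω = n})
    -- `Z` is independent of `(Z₊, Z₋, M)` with law `Bern(q)`: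
    (hq : P {ω | Z ω = 1} =
      P {ω | d + 1 ≤ M ω} / P {ω | M ω ≠ d})
    (hindep : ∀ (a n b₁ b₂ : ℤ),
      P ({ω | Z ω = a} ∩ ({ω | Zp ω = b₁} ∩ {ω | Zm ω = b₂} ∩ {ω | M ω = n})) =
        P {ω | Z ω = a} * P ({ω | Zp ω = b₁} ∩ {ω | Zm ω = b₂} ∩ {ω | M ω = n})) :
    Measure.map (fun ω => M ω + (Z ω * Zp ω - (1 - Z ω) * Zm ω)) P =
      (Measure.map M P)[|{d}ᶜ] := by
  have hZ_indep := indepFun_triple_of_measure_inter_fiber hZmeas hZpmeas hZmmeas hMmeas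
    fun a b₁ b₂ n => hindep a n b₁ b₂
  exact ne_coupling_of_latticeLogConcave_general P M Zp Zm Z hMmeas hZpmeas hZmmeas hZmeas
    hLC.ordConnected_support d hd hZp01 hZm01 hZ01
    (fun n => measureReal_fiber_one_inter_of_joint_bern hZpmeas hZmmeas hZp01 hZm01 (hcond n))
    (fun n => measureReal_fiber_one_inter_of_joint_bern hZmmeas hZpmeas hZm01 hZp01 fun b₁ b₂ => by
      rw [inter_comm (Zm ⁻¹' _), mul_comm (bern _ _)]
      exact hcond n b₂ b₁)
    hq (hZ_indep.comp measurable_id (measurable_fst.prodMk measurable_snd.snd))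
    (hZ_indep.comp measurable_id measurable_snd)
end
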